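/- Let x₀ be a state, ℓ₁,…,ℓₙ be labels, y₀ = σ(x₀), xᵢ = next(xᵢ₋₁, ℓᵢ) for i = 1,…,n, and yᵢ = terminal(yᵢ₋₁, α(yᵢ₋₁, ℓᵢ)) for i = 1,…,n. If σ'(next(x,ℓ)) ≅ terminal(σ'(x), α(σ'(x),ℓ)) for every state x, every label ℓ, and every state mapping σ' congruent to σ, then yᵢ ≅ σ(xᵢ) for all i = 1,…,n. -/

import Mathlib

/-!
A state mapping may be changed at a single state without leaving its congruence class, provided
the new value is congruent to the old one. So whenever `y ≅ σ x`, some `σ' ≅ σ` satisfies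
`σ' x = y`, and the hypothesis on `σ'` at `x` shows that a step of the implementation from `y`
ends congruent to `σ' (next x ℓ)`, hence to `σ (next x ℓ)`.
-/

theorem exists_forall_rel_and_apply_eq {ι : Type*} {β : ι → Type*} {r : ∀ i, β i → β i → Prop}
    (hr : ∀ i b, r i b b) {f : ∀ i, β i} {i : ι} {b : β i} (hb : r i b (f i)) :
    ∃ g : ∀ i, β i, (∀ j, r j (g j) (f j)) ∧ g i = b := by
  classical
  exact ⟨Function.update f i b,
    (Function.forall_update_iff f fun j c ↦ r j c (f j)).2 ⟨hb, fun j _ ↦ hr j (f j)⟩,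
    Function.update_self i b f⟩

theorem rel_step_of_forall_rel {S T : Type*} {r : T → T → Prop} (hr : Equivalence r) {σ : S → T}
    {s s' : S} {step : T → T}
    (hstep : ∀ σ' : S → T, (∀ a, r (σ' a) (σ a)) → r (σ' s') (step (σ' s)))
    {t : T} (ht : r t (σ s)) : r (step t) (σ s') := by
  obtain ⟨σ', hσ', rfl⟩ := exists_forall_rel_and_apply_eq (fun _ : S ↦ hr.refl) ht
  exact hr.trans (hr.symm (hstep σ' hσ')) (hσ' s')

/-- If `σ' (next x ℓ) ≅ terminal (σ' x) (α (σ' x) ℓ)` for every state `x`,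
label `ℓ`, and state mapping `σ'` congruent to `σ`, then along any trace we have
`yᵢ ≅ σ xᵢ` for all `i`. -/
theorem stmt_1 {S T L M : Type*}
    (next : S → L → S) (α : T → L → M) (terminal : T → M → T) (σ : S → T)
    (cong : T → T → Prop) (hcong : Equivalence cong)
    (n : ℕ) (ℓ : Fin n → L) (x : Fin (n + 1) → S) (y : Fin (n + 1) → T)
    (hy0 : y 0 = σ (x 0))
    (hx : ∀ i : Fin n, x i.succ = next (x i.castSucc) (ℓ i))
    (hy : ∀ i : Fin n, y i.succ = terminal (y i.castSucc) (α (y i.castSucc) (ℓ i)))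
    (h : ∀ σ' : S → T, (∀ s : S, cong (σ' s) (σ s)) →
      ∀ (s : S) (l : L), cong (σ' (next s l)) (terminal (σ' s) (α (σ' s) l))) :
    ∀ i : Fin (n + 1), cong (y i) (σ (x i)) := by
  intro i
  induction i using Fin.induction with
  | zero => exact hy0 ▸ hcong.refl (y 0)
  | succ i ih =>
    rw [hx, hy]
    exact rel_step_of_forall_rel hcong (step := fun t ↦ terminal t (α t (ℓ i)))
      (fun σ' hσ' ↦ h σ' hσ' (x i.castSucc) (ℓ i)) ih
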